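/- Every regular derivation in a cyclic proof system admits a cyclic representation: there is a finite, downward-closed set RepNode of its nodes, a set Bud ⊆ RepNode such that no child of a bud lies in RepNode and every child of a non-bud node of RepNode lies in RepNode, and a map sprout : Bud → RepNode assigning to each bud a node strictly below it whose subderivation is isomorphic to the bud's subderivation. -/

import Mathlib

/-!
Call a node *repeating* if some node strictly below it (nearer
the root, that is, a proper prefix of its address) has an isomorphic subderivation. Take
`RepNode` to be the valid nodes none of whose strict predecessors is repeating, and `Bud` to be the
repeating nodes among them; the closure conditions are then immediate. `RepNode` is finite: the
strict predecessors of one of its nodes have pairwise non-isomorphic subderivations, so by regularity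
its depth is at most the size of any finite set of representatives of the isomorphism classes
(`length_le_of_noRepeatBelow`), and a finitely branching tree has finitely many nodes of bounded depth
(`finite_valid_length_le`).
-/

set_option linter.unusedVariables false

/-- Labels of size-change graph edges: `ge` (preserving, ≥) or `gt` (progressing, >). -/
inductive SCLabel : Type
  | ge | gt
deriving DecidableEq, Repr

/-- An edge `(j, l, j')` of a size-change graph. -/
abbrev SCEdge : Type := ℕ × SCLabel × ℕ

/-- A size-change graph from `n` to `m`: a finite set of labelled edges with
sources below `n` and targets below `m`. -/
def IsSCGraph (n m : ℕ) (G : Finset SCEdge) : Prop :=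
  ∀ e ∈ G, e.1 < n ∧ e.2.2 < m

/-- An infinite sequence of size-change graphs (given by their edge sets) is progressing:
there is a trace (a starting time `k` and a path `t` from `k` onwards through the graphs)
that uses a `>`-labelled edge infinitely often. -/
def ProgressingSeq (E : ℕ → Finset SCEdge) : Prop :=
  ∃ (k : ℕ) (t : ℕ → ℕ),
    (∀ i, k ≤ i → ∃ l, (t i, l, t (i + 1)) ∈ E i) ∧
    ∀ N, ∃ i, N ≤ i ∧ k ≤ i ∧ (t i, SCLabel.gt, t (i + 1)) ∈ E i

/-- An abstract cyclic proof system: judgments, rule instances with a finite list of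
premises (given by `numPrem` and `prem`) and a conclusion, trace-object counts `ob`,
and a size-change graph from the conclusion to each premise. -/
structure CyclicSystem where
  Judg : Type
  Rule : Type
  numPrem : Rule → ℕ
  prem : Rule → ℕ → Judg
  concl : Rule → Judg
  ob : Judg → ℕ
  graph : Rule → ℕ → Finset SCEdge
  graph_bound : ∀ r i, i < numPrem r → IsSCGraph (ob (concl r)) (ob (prem r i)) (graph r i)

/-- A (possibly infinite) derivation in a cyclic proof system: a tree whose nodes are
addressed by the list of child indices leading to them from the root, each node carrying
a rule, such that the `i`-th child's conclusion is the `i`-th premise. -/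
structure CDerivation (C : CyclicSystem) where
  rule : List ℕ → C.Rule
  coh : ∀ p i, i < C.numPrem (rule p) → C.concl (rule (p ++ [i])) = C.prem (rule p) i

namespace CDerivation

variable {C : CyclicSystem}

/-- The valid nodes (addresses) of a derivation. -/
inductive Valid (d : CDerivation C) : List ℕ → Prop
  | root : Valid d []
  | child (p i) : Valid d p → i < C.numPrem (d.rule p) → Valid d (p ++ [i])

/-- The judgment at a node. -/
def judgAt (d : CDerivation C) (p : List ℕ) : C.Judg := C.concl (d.rule p)

/-- The subderivations rooted at `p` and at `p'` are isomorphic. -/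
def Iso (d : CDerivation C) (p p' : List ℕ) : Prop :=
  ∀ q : List ℕ, (d.Valid (p ++ q) ↔ d.Valid (p' ++ q)) ∧
    (d.Valid (p ++ q) → d.rule (p ++ q) = d.rule (p' ++ q))

/-- A derivation is regular if it has only finitely many distinct subderivations
up to isomorphism. -/
def Regular (d : CDerivation C) : Prop :=
  ∃ S : Finset (List ℕ), ∀ p, d.Valid p → ∃ p' ∈ S, d.Iso p p'

/-- The node reached after following the first `i` steps of an infinite branch `b`. -/
def prefixList (b : ℕ → ℕ) (i : ℕ) : List ℕ := (List.range i).map b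

/-- `b` describes an infinite branch of `d` (by giving the child index at every step). -/
def IsInfiniteBranch (d : CDerivation C) (b : ℕ → ℕ) : Prop :=
  ∀ i, d.Valid (prefixList b i)

/-- The sequence of size-change graphs induced along an infinite branch. -/
def branchGraphs (d : CDerivation C) (b : ℕ → ℕ) (i : ℕ) : Finset SCEdge :=
  C.graph (d.rule (prefixList b i)) (b i)

/-- A derivation is a proof if it is regular and the sequence of size-change graphs
induced along every infinite branch is progressing. -/
def IsProof (d : CDerivation C) : Prop :=
  d.Regular ∧ ∀ b : ℕ → ℕ, d.IsInfiniteBranch b → ProgressingSeq (d.branchGraphs b)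

end CDerivation

/-- A cyclic representation of a (regular) derivation: a finite downward-closed set of
nodes `RepNode`, a set of buds (leaves of the representation), and a sprout map sending
each bud to a node strictly below it with an isomorphic subderivation. -/
structure CyclicRep {C : CyclicSystem} (d : CDerivation C) where
  RepNode : Finset (List ℕ)
  root_mem : [] ∈ RepNode
  valid : ∀ p ∈ RepNode, d.Valid p
  downClosed : ∀ p ∈ RepNode, ∀ q : List ℕ, q <+: p → q ∈ RepNode
  Bud : Finset (List ℕ)
  bud_sub : Bud ⊆ RepNode
  bud_no_child : ∀ p ∈ Bud, ∀ i : ℕ, p ++ [i] ∉ RepNode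
  internal_child : ∀ p ∈ RepNode, p ∉ Bud → ∀ i, i < C.numPrem (d.rule p) → p ++ [i] ∈ RepNode
  sprout : List ℕ → List ℕ
  sprout_mem : ∀ p ∈ Bud, sprout p ∈ RepNode
  sprout_strictly_below : ∀ p ∈ Bud, sprout p <+: p ∧ sprout p ≠ p
  sprout_iso : ∀ p ∈ Bud, d.Iso p (sprout p)

namespace CDerivation

variable {C : CyclicSystem}

theorem Iso.symm {d : CDerivation C} {p q : List ℕ} (h : d.Iso p q) : d.Iso q p :=
  fun r => ⟨(h r).1.symm, fun hv => ((h r).2 ((h r).1.2 hv)).symm⟩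

theorem Iso.trans {d : CDerivation C} {p q r : List ℕ} (h : d.Iso p q) (h' : d.Iso q r) :
    d.Iso p r :=
  fun s => ⟨(h s).1.trans (h' s).1, fun hv => ((h s).2 hv).trans ((h' s).2 ((h s).1.1 hv))⟩

theorem Valid.of_prefix {d : CDerivation C} {p q : List ℕ} (h : d.Valid p) (hq : q <+: p) :
    d.Valid q := by
  induction h with
  | root => rw [List.prefix_nil.1 hq]; exact .root
  | child p i hp hi ih =>
    rcases List.prefix_concat_iff.1 hq with rfl | h
    · exact .child p i hp hi
    · exact ih h

theorem finite_valid_length_le (d : CDerivation C) (n : ℕ) :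
    {p : List ℕ | d.Valid p ∧ p.length ≤ n}.Finite := by
  induction n with
  | zero =>
    refine (Set.finite_singleton []).subset ?_
    rintro p ⟨-, hp⟩
    simpa using hp
  | succ n ih =>
    refine ((ih.biUnion fun p _ =>
      (Set.finite_Iio (C.numPrem (d.rule p))).image fun i => p ++ [i]).union
        (Set.finite_singleton [])).subset ?_
    rintro p ⟨hv, hl⟩
    cases hv with
    | root => exact Or.inr rfl
    | child p i hp hi =>
      refine Or.inl (Set.mem_biUnion (x := p) ⟨hp, ?_⟩ ⟨i, hi, rfl⟩)
      simpa using hl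

/-- A node is repeating if a node strictly below it has an isomorphic subderivation. -/
def Repeating (d : CDerivation C) (p : List ℕ) : Prop :=
  ∃ q, (q <+: p ∧ q ≠ p) ∧ d.Iso p q

/-- No node strictly below `p` is repeating; `p` itself may be. -/
def NoRepeatBelow (d : CDerivation C) (p : List ℕ) : Prop :=
  ∀ q, q <+: p → q ≠ p → ¬ d.Repeating q

/-- Pigeonhole: if `S` meets every isomorphism class of subderivations, then the strict
predecessors of `p`, which are pairwise non-isomorphic, inject into `S`. -/
theorem length_le_of_noRepeatBelow {d : CDerivation C} {S : Finset (List ℕ)}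
    (hS : ∀ p, d.Valid p → ∃ p' ∈ S, d.Iso p p') {p : List ℕ} (hv : d.Valid p)
    (hp : d.NoRepeatBelow p) : p.length ≤ S.card := by
  by_contra! hlt
  choose f hfS hf using fun i => hS _ (hv.of_prefix (List.take_prefix i p))
  obtain ⟨i, hi, j, hj, hne, hij⟩ := Finset.exists_ne_map_eq_of_card_lt_of_maps_to
    (s := Finset.range p.length) (t := S) (f := f) (by simpa using hlt) (fun i _ => hfS i)
  -- A coincidence `f a = f b` with `a < b < p.length` makes `p.take b` repeating, with witness `p.take a`.
  have key : ∀ a b, a < b → b < p.length → f a = f b → False := by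
    intro a b hab hb hfab
    refine hp (p.take b) (List.take_prefix b p) (fun h => ?_)
      ⟨p.take a, ⟨List.take_prefix_take_left hab.le, fun h => ?_⟩,
        (hf b).trans (hfab ▸ (hf a).symm)⟩
    · have := congrArg List.length h
      simp at this; omega
    · have := congrArg List.length h
      simp at this; omega
  rw [Finset.mem_range] at hi hj
  rcases lt_or_gt_of_ne hne with h | h
  · exact key i j h hj hij
  · exact key j i h hi hij.symm

end CDerivation

/-- every regular derivation in a cyclic proof system admits a
cyclic representation. -/
theorem every_regular_derivation_has_cyclic_representation
    (C : CyclicSystem) (d : CDerivation C) (hreg : d.Regular) :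
    Nonempty (CyclicRep d) := by
  classical
  obtain ⟨S, hS⟩ := hreg
  have hfin : {p : List ℕ | d.Valid p ∧ d.NoRepeatBelow p}.Finite :=
    (d.finite_valid_length_le S.card).subset fun p hp =>
      ⟨hp.1, CDerivation.length_le_of_noRepeatBelow hS hp.1 hp.2⟩
  have hmem : ∀ p, p ∈ hfin.toFinset ↔ d.Valid p ∧ d.NoRepeatBelow p := fun p => by simp
  have hdown : ∀ p ∈ hfin.toFinset, ∀ q : List ℕ, q <+: p → q ∈ hfin.toFinset := by
    intro p hp q hq
    rw [hmem] at hp ⊢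
    refine ⟨hp.1.of_prefix hq, fun r hr hne => hp.2 r (hr.trans hq) ?_⟩
    rintro rfl
    exact hne (hr.eq_of_length_le hq.length_le)
  have hsp : ∀ p, ∃ q, d.Repeating p → (q <+: p ∧ q ≠ p) ∧ d.Iso p q := fun p => by
    by_cases h : d.Repeating p
    · exact h.imp fun _ hq _ => hq
    · exact ⟨[], fun h' => absurd h' h⟩
  choose sprout hsprout using hsp
  refine ⟨{
    RepNode := hfin.toFinset
    root_mem := (hmem _).2 ⟨.root, fun q hq hne => absurd (List.prefix_nil.1 hq) hne⟩
    valid := fun p hp => ((hmem p).1 hp).1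
    downClosed := hdown
    Bud := hfin.toFinset.filter d.Repeating
    bud_sub := Finset.filter_subset _ _
    bud_no_child := fun p hp i hi =>
      ((hmem _).1 hi).2 p (List.prefix_append p [i]) (by simp) (Finset.mem_filter.1 hp).2
    internal_child := fun p hp hb i hi => ?_
    sprout := sprout
    sprout_mem := fun p hp => hdown p (Finset.mem_filter.1 hp).1 _
      (hsprout p (Finset.mem_filter.1 hp).2).1.1
    sprout_strictly_below := fun p hp => (hsprout p (Finset.mem_filter.1 hp).2).1
    sprout_iso := fun p hp => (hsprout p (Finset.mem_filter.1 hp).2).2 }⟩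
  have hp' := (hmem p).1 hp
  refine (hmem _).2 ⟨.child p i hp'.1 hi, fun q hq hne hrep => ?_⟩
  have hqp : q <+: p := (List.prefix_concat_iff.1 hq).resolve_left hne
  by_cases h : q = p
  · exact hb (Finset.mem_filter.2 ⟨hp, h ▸ hrep⟩)
  · exact hp'.2 q hqp h hrep
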